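/- Let G be a finite connected simple graph with an injective edge-weight function w, and let T be the (unique) minimum-weight spanning tree of G. Then for every edge e of G, e is not an edge of T if and only if there exists a cycle C in G containing e such that every edge of C has weight at most w(e). -/

import Mathlib

open SimpleGraph Finset

variable {V : Type*}

/-- `T` is a spanning tree of `G`: a subgraph on the same vertex set that is a tree. -/
def IsSpanningTree (G T : SimpleGraph V) : Prop :=
  T ≤ G ∧ T.IsTree

/-- The total weight of the edges of a graph. -/
noncomputable def totalWeight [Fintype V] (T : SimpleGraph V) (w : Sym2 V → ℝ) : ℝ :=
  ∑ e ∈ T.edgeSet.toFinite.toFinset, w e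

/-- `T` is a minimum-weight spanning tree of `G` with respect to `w`. -/
def IsMinSpanningTree [Fintype V] (G T : SimpleGraph V) (w : Sym2 V → ℝ) : Prop :=
  IsSpanningTree G T ∧
    ∀ T' : SimpleGraph V, IsSpanningTree G T' → totalWeight T w ≤ totalWeight T' w

/-- Adding an edge to a spanning tree and deleting an edge of the path joining its ends gives
a spanning tree. -/
theorem IsSpanningTree.exchange {G T : SimpleGraph V} (hT : IsSpanningTree G T) {x y : V}
    (hG : G.Adj x y) (hxy : ¬ T.Adj x y) {p : T.Walk x y} (hp : p.IsPath)
    {f : Sym2 V} (hf : f ∈ p.edges) :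
    IsSpanningTree G (T.deleteEdges {f} ⊔ edge x y) := by
  have hfT : f ∈ T.edgeSet := p.edges_subset_edgeSet hf
  have hfe : f ≠ s(x, y) := by
    rintro rfl
    exact hxy hfT
  refine ⟨sup_le ((deleteEdges_le _).trans hT.1) ((edge_le_iff G).2 (Or.inr hG)), ?_, ?_⟩
  · have hH : (T ⊔ edge x y).Connected := hT.2.connected.mono le_sup_left
    have hyx : (T ⊔ edge x y).Adj y x := by
      simp [edge_adj, hG.ne.symm]
    have hcyc : (Walk.cons hyx (p.mapLe le_sup_left)).IsCycle := by
      refine (Walk.cons_isCycle_iff _ _).2 ⟨hp.mapLe _, fun h => hxy ?_⟩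
      rw [Walk.edges_mapLe_eq_edges] at h
      exact (p.edges_subset_edgeSet h).symm
    have hnb : ¬ (T ⊔ edge x y).IsBridge f := fun hb =>
      hb.notMem_edges_of_isCycle hcyc (by simp [hf])
    have hdel : T.deleteEdges {f} ⊔ edge x y = (T ⊔ edge x y).deleteEdges {f} := by
      ext a b
      simp only [sup_adj, deleteEdges_adj, edge_adj, Set.mem_singleton_iff]
      constructor
      · rintro (h | ⟨h, hne⟩)
        · exact ⟨Or.inl h.1, h.2⟩
        · refine ⟨Or.inr ⟨h, hne⟩, fun hab => hfe ?_⟩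
          rw [← hab, Sym2.eq_iff]
          tauto
      · tauto
    rw [hdel]
    induction f with
    | h a b => exact hH.connected_delete_edge_of_not_isBridge hnb
  · refine (hT.2.isAcyclic.anti (deleteEdges_le _)).sup_edge_of_not_reachable fun hr => ?_
    obtain ⟨q, hq⟩ := hr.exists_isPath
    have hpq : p = q.mapLe (deleteEdges_le _) :=
      congrArg Subtype.val ((hT.2.isAcyclic.subsingleton_path x y).elim ⟨p, hp⟩ ⟨_, hq.mapLe _⟩)
    rw [hpq, Walk.edges_mapLe_eq_edges] at hf
    have := q.edges_subset_edgeSet hf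
    simp at this

theorem totalWeight_exchange [Fintype V] {T : SimpleGraph V} (w : Sym2 V → ℝ) {x y : V}
    (hne : x ≠ y) (hxy : ¬ T.Adj x y) {f : Sym2 V} (hf : f ∈ T.edgeSet) :
    totalWeight (T.deleteEdges {f} ⊔ edge x y) w = totalWeight T w - w f + w s(x, y) := by
  classical
  have hset : (T.deleteEdges {f} ⊔ edge x y).edgeSet.toFinite.toFinset =
      insert s(x, y) (T.edgeSet.toFinite.toFinset.erase f) := by
    ext e
    simp [edgeSet_sup, edgeSet_deleteEdges, edgeSet_edge_of_ne hne]
    tauto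
  rw [totalWeight, hset, Finset.sum_insert (by simp [hxy]),
    Finset.sum_erase_eq_sub (by simpa using hf), totalWeight]
  ring

/-- An edge outside a minimum-weight spanning tree is at least as heavy as every edge of the
tree path joining its ends. -/
theorem IsMinSpanningTree.weight_le [Fintype V] {G T : SimpleGraph V} {w : Sym2 V → ℝ}
    (hT : IsMinSpanningTree G T w) {x y : V} (hG : G.Adj x y) (hxy : ¬ T.Adj x y)
    {p : T.Walk x y} (hp : p.IsPath) {f : Sym2 V} (hf : f ∈ p.edges) : w f ≤ w s(x, y) := by
  have h := hT.2 _ (hT.1.exchange hG hxy hp hf)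
  rw [totalWeight_exchange w hG.ne hxy (p.edges_subset_edgeSet hf)] at h
  linarith

/-- If the ends of `e` are not connected in `F`, then a cycle through `e` has a further edge
whose ends are not connected in `F`. -/
theorem SimpleGraph.Walk.IsCycle.exists_ne_not_reachable {G F : SimpleGraph V} {a x y : V}
    {c : G.Walk a a} (hc : c.IsCycle) (hmem : s(x, y) ∈ c.edges) (hF : ¬ F.Reachable x y) :
    ∃ u v, s(u, v) ∈ c.edges ∧ s(u, v) ≠ s(x, y) ∧ ¬ F.Reachable u v := by
  by_contra! hcon
  let K : SimpleGraph V := fromEdgeSet {e | e ∈ c.edges}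
  have hK : ∀ e ∈ c.edges, e ∈ K.edgeSet := fun e he => by
    rw [edgeSet_fromEdgeSet]
    exact ⟨he, G.not_isDiag_of_mem_edgeSet (c.edges_subset_edgeSet he)⟩
  have hr : (K.deleteEdges {s(x, y)}).Reachable x y := by
    by_contra hb
    exact IsBridge.notMem_edges_of_isCycle (isBridge_iff.2 hb) (hc.transfer hK)
      (by rwa [Walk.edges_transfer])
  suffices h : ∀ z, Relation.ReflTransGen (K.deleteEdges {s(x, y)}).Adj x z → F.Reachable x z from
    hF (h y ((reachable_iff_reflTransGen _ _).1 hr))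
  intro z hz
  induction hz with
  | refl => rfl
  | tail _ hadj ih =>
    rw [deleteEdges_adj, fromEdgeSet_adj] at hadj
    exact ih.trans (hcon _ _ hadj.1.1 hadj.2)

/-- For the minimum spanning tree `T` of a finite connected graph `G` with injective
edge weights, an edge `e` of `G` is not in `T` iff `e` lies on a cycle of `G` all of
whose edges have weight at most `w e`. -/
theorem stmt_0 [Fintype V] (G : SimpleGraph V) (hG : G.Connected)
    (w : Sym2 V → ℝ) (hw : Set.InjOn w G.edgeSet)
    (T : SimpleGraph V) (hT : IsMinSpanningTree G T w)
    (e : Sym2 V) (he : e ∈ G.edgeSet) :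
    e ∉ T.edgeSet ↔
      ∃ (a : V) (c : G.Walk a a), c.IsCycle ∧ e ∈ c.edges ∧
        ∀ e' ∈ c.edges, w e' ≤ w e := by
  induction e with | h x y => ?_
  rw [mem_edgeSet] at he ⊢
  constructor
  · intro hxy
    obtain ⟨p, hp⟩ := (hT.1.2.connected x y).exists_isPath
    refine ⟨y, Walk.cons he.symm (p.mapLe hT.1.1), ?_, by simp [Sym2.eq_swap], ?_⟩
    · refine (Walk.cons_isCycle_iff _ _).2 ⟨hp.mapLe _, fun h => hxy ?_⟩
      rw [Walk.edges_mapLe_eq_edges] at h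
      exact (p.edges_subset_edgeSet h).symm
    · intro f hf
      rw [Walk.edges_cons, Walk.edges_mapLe_eq_edges, List.mem_cons] at hf
      rcases hf with rfl | hf
      · rw [Sym2.eq_swap]
      · exact hT.weight_le he hxy hp hf
  · rintro ⟨a, c, hc, hmem, hle⟩ hxy
    have hF : ¬ (T.deleteEdges {s(x, y)}).Reachable x y :=
      isBridge_iff.1 (isAcyclic_iff_forall_adj_isBridge.1 hT.1.2.isAcyclic hxy)
    obtain ⟨u, v, huv, hne, hnr⟩ := hc.exists_ne_not_reachable hmem hF
    have hGuv : G.Adj u v := c.edges_subset_edgeSet huv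
    have hTuv : ¬ T.Adj u v := fun h =>
      hnr (Adj.reachable (deleteEdges_adj.2 ⟨h, hne⟩))
    obtain ⟨p, hp⟩ := (hT.1.2.connected u v).exists_isPath
    have hep : s(x, y) ∈ p.edges := by
      by_contra h
      exact hnr (reachable_deleteEdges_iff_exists_walk.2 ⟨p, h⟩)
    exact hne (hw hGuv he ((hle _ huv).antisymm (hT.weight_le hGuv hTuv hp hep)))
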